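/- Let φ₁, φ₂ be GF²-sentences and Σ a signature. Then φ₁ ⊨_Σ φ₂ if and only if for every model 𝔄 of φ₁ of finite outdegree there is a model 𝔅 of φ₂ such that: (1) for every a ∈ A there is b ∈ B with (𝔄,a) ∼_Σ (𝔅,b); and (2) for every b ∈ B and every k ≥ 0 there is a ∈ A with (𝔄,a) ∼^k_Σ (𝔅,b). -/

import Mathlib

/-! Core: relational two-variable first-order logic with equality (unary and
binary predicates only), the guarded fragment GF², structures, satisfaction,
atomic types, (bounded/delimited) guarded bisimulations, forest structures. -/

namespace GFC

inductive Var : Type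
  | x
  | y
deriving DecidableEq

/-- Formulas of two-variable relational FO with equality (variables `x`, `y`). -/
inductive Fml (U B : Type) : Type
  | uatom : U → Var → Fml U B
  | batom : B → Var → Var → Fml U B
  | eqv   : Var → Var → Fml U B
  | fls   : Fml U B
  | neg   : Fml U B → Fml U B
  | conj  : Fml U B → Fml U B → Fml U B
  | disj  : Fml U B → Fml U B → Fml U B
  | impl  : Fml U B → Fml U B → Fml U B
  | all   : Var → Fml U B → Fml U B
  | ex    : Var → Fml U B → Fml U B

namespace Fml

variable {U B : Type}

def free : Fml U B → Set Var
  | uatom _ v => {v}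
  | batom _ v w => {v, w}
  | eqv v w => {v, w}
  | fls => ∅
  | neg φ => φ.free
  | conj φ ψ => φ.free ∪ ψ.free
  | disj φ ψ => φ.free ∪ ψ.free
  | impl φ ψ => φ.free ∪ ψ.free
  | all v φ => φ.free \ {v}
  | ex v φ => φ.free \ {v}

def IsSentence (φ : Fml U B) : Prop := φ.free = ∅

def upreds : Fml U B → Set U
  | uatom P _ => {P}
  | batom _ _ _ => ∅
  | eqv _ _ => ∅
  | fls => ∅
  | neg φ => φ.upreds
  | conj φ ψ => φ.upreds ∪ ψ.upreds
  | disj φ ψ => φ.upreds ∪ ψ.upreds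
  | impl φ ψ => φ.upreds ∪ ψ.upreds
  | all _ φ => φ.upreds
  | ex _ φ => φ.upreds

def bpreds : Fml U B → Set B
  | uatom _ _ => ∅
  | batom R _ _ => {R}
  | eqv _ _ => ∅
  | fls => ∅
  | neg φ => φ.bpreds
  | conj φ ψ => φ.bpreds ∪ ψ.bpreds
  | disj φ ψ => φ.bpreds ∪ ψ.bpreds
  | impl φ ψ => φ.bpreds ∪ ψ.bpreds
  | all _ φ => φ.bpreds
  | ex _ φ => φ.bpreds

def IsAtom : Fml U B → Prop
  | uatom _ _ => True
  | batom _ _ _ => True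
  | eqv _ _ => True
  | _ => False

def IsEqAtom : Fml U B → Prop
  | eqv _ _ => True
  | _ => False

/-- guarded quantifier depth (in GF² formulas every quantifier is guarded) -/
def gdepth : Fml U B → ℕ
  | uatom _ _ => 0
  | batom _ _ _ => 0
  | eqv _ _ => 0
  | fls => 0
  | neg φ => φ.gdepth
  | conj φ ψ => max φ.gdepth ψ.gdepth
  | disj φ ψ => max φ.gdepth ψ.gdepth
  | impl φ ψ => max φ.gdepth ψ.gdepth
  | all _ φ => φ.gdepth + 1
  | ex _ φ => φ.gdepth + 1

/-- subformulas (including the formula itself) -/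
def Subf : Fml U B → Set (Fml U B)
  | uatom P v => {uatom P v}
  | batom R v w => {batom R v w}
  | eqv v w => {eqv v w}
  | fls => {fls}
  | neg φ => insert (neg φ) φ.Subf
  | conj φ ψ => insert (conj φ ψ) (φ.Subf ∪ ψ.Subf)
  | disj φ ψ => insert (disj φ ψ) (φ.Subf ∪ ψ.Subf)
  | impl φ ψ => insert (impl φ ψ) (φ.Subf ∪ ψ.Subf)
  | all v φ => insert (all v φ) φ.Subf
  | ex v φ => insert (ex v φ) φ.Subf

/-- rename the free variables along `f` (bound variables untouched) -/
def renameFree : (Var → Var) → Fml U B → Fml U B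
  | f, uatom P v => uatom P (f v)
  | f, batom R v w => batom R (f v) (f w)
  | f, eqv v w => eqv (f v) (f w)
  | _, fls => fls
  | f, neg φ => neg (renameFree f φ)
  | f, conj φ ψ => conj (renameFree f φ) (renameFree f ψ)
  | f, disj φ ψ => disj (renameFree f φ) (renameFree f ψ)
  | f, impl φ ψ => impl (renameFree f φ) (renameFree f ψ)
  | f, all v φ => all v (renameFree (Function.update f v v) φ)
  | f, ex v φ => ex v (renameFree (Function.update f v v) φ)

end Fml

/-- The two-variable guarded fragment GF²: quantification only in the guarded
patterns `∀v (α → φ)` and `∃v (α ∧ φ)` with `α` an atom containing all free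
variables of `φ` as well as the quantified variable `v`. -/
inductive IsGF2 {U B : Type} : Fml U B → Prop
  | uatom (P : U) (v : Var) : IsGF2 (.uatom P v)
  | batom (R : B) (v w : Var) : IsGF2 (.batom R v w)
  | eqv (v w : Var) : IsGF2 (.eqv v w)
  | fls : IsGF2 .fls
  | neg {φ} : IsGF2 φ → IsGF2 (.neg φ)
  | conj {φ ψ} : IsGF2 φ → IsGF2 ψ → IsGF2 (.conj φ ψ)
  | disj {φ ψ} : IsGF2 φ → IsGF2 ψ → IsGF2 (.disj φ ψ)
  | impl {φ ψ} : IsGF2 φ → IsGF2 ψ → IsGF2 (.impl φ ψ)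
  | allG {v : Var} {α φ : Fml U B} :
      α.IsAtom → IsGF2 φ → φ.free ∪ {v} ⊆ α.free → IsGF2 (.all v (.impl α φ))
  | exG {v : Var} {α φ : Fml U B} :
      α.IsAtom → IsGF2 φ → φ.free ∪ {v} ⊆ α.free → IsGF2 (.ex v (.conj α φ))

/-- openGF²: GF² formulas with exactly one free variable, in which equality is
never used as a guard and which contain no subformula that is a sentence. -/
def IsOpenGF2 {U B : Type} (φ : Fml U B) : Prop :=
  IsGF2 φ ∧ (∃ v, φ.free = {v}) ∧
  (∀ ψ ∈ φ.Subf, ¬ ψ.IsSentence) ∧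
  (∀ ψ ∈ φ.Subf, ∀ (v : Var) (α χ : Fml U B),
      (ψ = .all v (.impl α χ) ∨ ψ = .ex v (.conj α χ)) → ¬ α.IsEqAtom)

/-- relational structures interpreting unary predicates `U` and binary
predicates `B` -/
structure Str (U B : Type) where
  Dom : Type
  nonempty : Nonempty Dom
  u : U → Dom → Prop
  b : B → Dom → Dom → Prop

def upd {D : Type} (σ : Var → D) (v : Var) (d : D) : Var → D :=
  fun w => if w = v then d else σ w

def Sat {U B : Type} (A : Str U B) : Fml U B → (Var → A.Dom) → Prop
  | .uatom P v, σ => A.u P (σ v)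
  | .batom R v w, σ => A.b R (σ v) (σ w)
  | .eqv v w, σ => σ v = σ w
  | .fls, _ => False
  | .neg φ, σ => ¬ Sat A φ σ
  | .conj φ ψ, σ => Sat A φ σ ∧ Sat A ψ σ
  | .disj φ ψ, σ => Sat A φ σ ∨ Sat A ψ σ
  | .impl φ ψ, σ => Sat A φ σ → Sat A ψ σ
  | .all v φ, σ => ∀ d : A.Dom, Sat A φ (upd σ v d)
  | .ex v φ, σ => ∃ d : A.Dom, Sat A φ (upd σ v d)

/-- truth of a sentence in a structure -/
def SatS {U B : Type} (A : Str U B) (φ : Fml U B) : Prop := ∀ σ, Sat A φ σ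

def Entails {U B : Type} (φ ψ : Fml U B) : Prop :=
  ∀ A : Str U B, SatS A φ → SatS A ψ

def Satisfiable {U B : Type} (φ : Fml U B) : Prop := ∃ A : Str U B, SatS A φ

/-- a GF²(Σ)-sentence, for the signature Σ = (SU, SB) -/
def IsGF2Sentence {U B : Type} (SU : Set U) (SB : Set B) (ψ : Fml U B) : Prop :=
  IsGF2 ψ ∧ ψ.IsSentence ∧ ψ.upreds ⊆ SU ∧ ψ.bpreds ⊆ SB

/-- `φ₁ ⊨_Σ φ₂` : GF²(Σ)-entailment -/
def GF2Entails {U B : Type} (SU : Set U) (SB : Set B) (φ₁ φ₂ : Fml U B) : Prop :=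
  ∀ ψ : Fml U B, IsGF2Sentence SU SB ψ → Entails φ₂ ψ → Entails φ₁ ψ

/-- atomic formulas in the variables x, y -/
inductive Atom2 (U B : Type) : Type
  | ua : U → Var → Atom2 U B
  | ba : B → Var → Var → Atom2 U B

def vval {D : Type} (a a' : D) : Var → D
  | .x => a
  | .y => a'

def Atom2.inSig {U B : Type} (SU : Set U) (SB : Set B) : Atom2 U B → Prop
  | .ua P _ => P ∈ SU
  | .ba R _ _ => R ∈ SB

def Atom2.holds {U B : Type} (A : Str U B) (a a' : A.Dom) : Atom2 U B → Prop
  | .ua P v => A.u P (vval a a' v)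
  | .ba R v w => A.b R (vval a a' v) (vval a a' w)

def Atom2.onlyX {U B : Type} : Atom2 U B → Prop
  | .ua _ v => v = Var.x
  | .ba _ v w => v = Var.x ∧ w = Var.x

/-- the atomic 1-type of `a` for the signature `(SU, SB)` (the set of
Σ-atoms in the single variable x satisfied by `a`; this determines the set of
negated atoms as well) -/
def atp1 {U B : Type} (A : Str U B) (SU : Set U) (SB : Set B) (a : A.Dom) :
    Set (Atom2 U B) :=
  {α | α.onlyX ∧ α.inSig SU SB ∧ α.holds A a a}

/-- the atomic 2-type of `(a, a')` for the signature `(SU, SB)` (the set of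
Σ-atoms in x, y satisfied by `(a, a')`; together with `a ≠ a'` this determines
the atomic 2-type) -/
def atp2 {U B : Type} (A : Str U B) (SU : Set U) (SB : Set B) (a a' : A.Dom) :
    Set (Atom2 U B) :=
  {α | α.inSig SU SB ∧ α.holds A a a'}

/-- the atomic 2-type of `(a, a')` is guarded (contains `R x y` or `R y x`
for some binary `R ∈ SB`) -/
def Guarded2 {U B : Type} (A : Str U B) (SB : Set B) (a a' : A.Dom) : Prop :=
  ∃ R ∈ SB, A.b R a a' ∨ A.b R a' a

/-- GF²(Σ)-bisimulation between structures `A` and `Bm` -/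
structure IsBisim {U B : Type} (A Bm : Str U B) (SU : Set U) (SB : Set B)
    (Z : A.Dom → Bm.Dom → Prop) : Prop where
  atom_eq : ∀ {a b}, Z a b → atp1 A SU SB a = atp1 Bm SU SB b
  forth : ∀ {a b}, Z a b → ∀ a', a' ≠ a → Guarded2 A SB a a' →
      ∃ b', b' ≠ b ∧ atp2 A SU SB a a' = atp2 Bm SU SB b b' ∧ Z a' b'
  back : ∀ {a b}, Z a b → ∀ b', b' ≠ b → Guarded2 Bm SB b b' →
      ∃ a', a' ≠ a ∧ atp2 A SU SB a a' = atp2 Bm SU SB b b' ∧ Z a' b'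

/-- `(A, a) ∼_Σ (Bm, b)` -/
def Bisim {U B : Type} (A Bm : Str U B) (SU : Set U) (SB : Set B)
    (a : A.Dom) (b : Bm.Dom) : Prop :=
  ∃ Z, IsBisim A Bm SU SB Z ∧ Z a b

/-- `(A, a) ∼ᵏ_Σ (Bm, b)` : k-GF²(Σ)-bisimilarity -/
def KBisim {U B : Type} (A Bm : Str U B) (SU : Set U) (SB : Set B) :
    ℕ → A.Dom → Bm.Dom → Prop
  | 0, a, b => atp1 A SU SB a = atp1 Bm SU SB b
  | k+1, a, b => atp1 A SU SB a = atp1 Bm SU SB b ∧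
      (∀ a', a' ≠ a → Guarded2 A SB a a' →
        ∃ b', b' ≠ b ∧ atp2 A SU SB a a' = atp2 Bm SU SB b b' ∧
          KBisim A Bm SU SB k a' b') ∧
      (∀ b', b' ≠ b → Guarded2 Bm SB b b' →
        ∃ a', a' ≠ a ∧ atp2 A SU SB a a' = atp2 Bm SU SB b b' ∧
          KBisim A Bm SU SB k a' b')

/-- a (full-signature) atomic 2-type, given as its set of positive atoms,
is guarded -/
def Guarded2Type {U B : Type} (τ : Set (Atom2 U B)) : Prop :=
  ∃ R : B, Atom2.ba R Var.x Var.y ∈ τ ∨ Atom2.ba R Var.y Var.x ∈ τ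

/-- successor-saturated structures -/
def SuccSaturated {U B : Type} (A : Str U B) : Prop :=
  ∀ (a : A.Dom) (τ : Set (Atom2 U B)) (Γ : Set (Fml U B)),
    Guarded2Type τ →
    (∀ ψ ∈ Γ, IsOpenGF2 ψ ∧ ψ.free = {Var.x}) →
    (∀ Γ' : Finset (Fml U B), ↑Γ' ⊆ Γ →
      ∃ a', a' ≠ a ∧ atp2 A Set.univ Set.univ a a' = τ ∧
        ∀ ψ ∈ Γ', Sat A ψ (fun _ => a')) →
    ∃ b', b' ≠ a ∧ atp2 A Set.univ Set.univ a b' = τ ∧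
      ∀ ψ ∈ Γ, Sat A ψ (fun _ => b')

/-- finite outdegree: every element stands in a guarded atomic 2-type (for the
full signature) to only finitely many elements -/
def FiniteOutdeg {U B : Type} (A : Str U B) : Prop :=
  ∀ a : A.Dom, {a' | a' ≠ a ∧ ∃ R : B, A.b R a a' ∨ A.b R a' a}.Finite

/-- Σ-adjacency (edges of the Gaifman graph of the Σ-reduct) -/
def SigAdj {U B : Type} (A : Str U B) (SB : Set B) (a a' : A.Dom) : Prop :=
  a ≠ a' ∧ ∃ R ∈ SB, A.b R a a' ∨ A.b R a' a

/-- A forest structure: a structure whose Gaifman graph is a forest, directed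
by choosing a root for each tree; `parent p c` says that `p` is the
predecessor (parent) of `c`. -/
structure Forest (U B : Type) extends Str U B where
  parent : Dom → Dom → Prop
  parent_unique : ∀ {c p p' : Dom}, parent p c → parent p' c → p = p'
  parent_wf : WellFounded parent
  adj_iff : ∀ a a' : Dom,
    (a ≠ a' ∧ ∃ R : B, b R a a' ∨ b R a' a) ↔ (parent a a' ∨ parent a' a)

namespace Forest

variable {U B : Type}

/-- `a` together with its descendants -/
def desc (F : Forest U B) (a : F.Dom) : Set F.Dom :=
  {c | Relation.ReflTransGen F.parent a c}

/-- the subtrees rooted at `a` and at `a'` are isomorphic -/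
def SubtreeIso (F : Forest U B) (a a' : F.Dom) : Prop :=
  ∃ f : (F.desc a) ≃ (F.desc a'),
    (f ⟨a, Relation.ReflTransGen.refl⟩).val = a' ∧
    (∀ c d : F.desc a, F.parent c.val d.val ↔ F.parent (f c).val (f d).val) ∧
    (∀ (P : U) (c : F.desc a), F.u P c.val ↔ F.u P (f c).val) ∧
    (∀ (R : B) (c d : F.desc a), F.b R c.val d.val ↔ F.b R (f c).val (f d).val)

/-- regular: only finitely many subtrees up to isomorphism -/
def Regular (F : Forest U B) : Prop :=
  ∃ S : Set F.Dom, S.Finite ∧ ∀ a, ∃ a' ∈ S, F.SubtreeIso a' a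

/-- `a ≺ a'` : `a` and `a'` lie in the same Σ-tree and `a` is a proper
ancestor of `a'` -/
def prec (F : Forest U B) (SB : Set B) (a a' : F.Dom) : Prop :=
  Relation.ReflTransGen (SigAdj F.toStr SB) a a' ∧ Relation.TransGen F.parent a a'

end Forest

/-- `a_⊥`-delimited GF²(Σ)-bisimulation: like a GF²(Σ)-bisimulation except that
the back-and-forth conditions are not required at pairs whose first component
is `abot` -/
structure IsPtDelimBisim {U B : Type} (A Bm : Str U B) (SU : Set U) (SB : Set B)
    (abot : A.Dom) (Z : A.Dom → Bm.Dom → Prop) : Prop where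
  atom_eq : ∀ {a b}, Z a b → atp1 A SU SB a = atp1 Bm SU SB b
  forth : ∀ {a b}, Z a b → a ≠ abot → ∀ a', a' ≠ a → Guarded2 A SB a a' →
      ∃ b', b' ≠ b ∧ atp2 A SU SB a a' = atp2 Bm SU SB b b' ∧ Z a' b'
  back : ∀ {a b}, Z a b → a ≠ abot → ∀ b', b' ≠ b → Guarded2 Bm SB b b' →
      ∃ a', a' ≠ a ∧ atp2 A SU SB a a' = atp2 Bm SU SB b b' ∧ Z a' b'

/-- `(A, a) ∼^{a_⊥}_Σ (Bm, b)` -/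
def PtDelimBisim {U B : Type} (A Bm : Str U B) (SU : Set U) (SB : Set B)
    (abot : A.Dom) (a : A.Dom) (b : Bm.Dom) : Prop :=
  ∃ Z, IsPtDelimBisim A Bm SU SB abot Z ∧ Z a b

/-- `A_⊥`-delimited GF²(Σ)-bisimulation between a forest structure `F` and a
structure `Bm`, given by a pair of relations `Z0 (∼⁰)` and `Z1 (∼¹)`. -/
structure IsDelimBisim {U B : Type} (F : Forest U B) (Bm : Str U B)
    (SU : Set U) (SB : Set B) (Abot : Set F.Dom)
    (Z0 Z1 : F.Dom → Bm.Dom → Prop) : Prop where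
  zero : ∀ {a b}, Z0 a b →
    atp1 F.toStr SU SB a = atp1 Bm SU SB b ∧
    (∀ a', a' ≠ a → Guarded2 F.toStr SB a a' →
      ∃ b', b' ≠ b ∧
        ((F.parent a' a ∧ a' ∈ Abot) → Z1 a' b') ∧
        (¬ (F.parent a' a ∧ a' ∈ Abot) → Z0 a' b')) ∧
    (∀ b', b' ≠ b → Guarded2 Bm SB b b' →
      ∃ a', a' ≠ a ∧
        ((F.parent a' a ∧ a' ∈ Abot) → Z1 a' b') ∧
        (¬ (F.parent a' a ∧ a' ∈ Abot) → Z0 a' b'))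
  one : ∀ {a b}, Z1 a b → (∀ p, F.parent p a → p ∉ Abot) →
    atp1 F.toStr SU SB a = atp1 Bm SU SB b ∧
    (∀ a', a' ≠ a → Guarded2 F.toStr SB a a' →
      ∃ b', b' ≠ b ∧
        ((F.parent a a' ∧ a ∈ Abot) → Z0 a' b') ∧
        (¬ (F.parent a a' ∧ a ∈ Abot) → Z1 a' b')) ∧
    (∀ b', b' ≠ b → Guarded2 Bm SB b b' →
      ∃ a', a' ≠ a ∧
        ((F.parent a a' ∧ a ∈ Abot) → Z0 a' b') ∧
        (¬ (F.parent a a' ∧ a ∈ Abot) → Z1 a' b'))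

/-- `(F, a) ∼^{A_⊥}_Σ (Bm, b)` -/
def DelimBisim {U B : Type} (F : Forest U B) (Bm : Str U B)
    (SU : Set U) (SB : Set B) (Abot : Set F.Dom) (a : F.Dom) (b : Bm.Dom) : Prop :=
  ∃ Z0 Z1, IsDelimBisim F Bm SU SB Abot Z0 Z1 ∧ Z0 a b

/-- `cl φ` : the subformulas of `φ` closed under single negation and renaming
of free variables (among x, y) -/
def clSet {U B : Type} (φ : Fml U B) : Set (Fml U B) :=
  {χ | ∃ ψ ∈ φ.Subf, ∃ f : Var → Var,
      χ = ψ.renameFree f ∨ χ = .neg (ψ.renameFree f)}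

/-- a 1-type for `φ₂`: a set of formulas `ψ(x)` from `cl φ₂` such that
`φ₂ ∧ ∃x ⋀ t(x)` is satisfiable -/
def OneType {U B : Type} (φ₂ : Fml U B) (t : Set (Fml U B)) : Prop :=
  t ⊆ clSet φ₂ ∧ (∀ ψ ∈ t, ψ.free ⊆ {Var.x}) ∧
  ∃ (A : Str U B) (a : A.Dom), SatS A φ₂ ∧ ∀ ψ ∈ t, Sat A ψ (fun _ => a)

/-- `tp_Bm(b)` : the 1-type of `b` in `Bm` (w.r.t. `φ₂`) -/
def tpOf {U B : Type} (Bm : Str U B) (φ₂ : Fml U B) (b : Bm.Dom) :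
    Set (Fml U B) :=
  {ψ | ψ ∈ clSet φ₂ ∧ ψ.free ⊆ {Var.x} ∧ Sat Bm ψ (fun _ => b)}

end GFC

namespace GFC

section helpers
variable {U B : Type}

theorem finite_Var : Finite Var :=
  Finite.of_surjective (fun b : Bool => if b then Var.x else Var.y) (by
    intro v
    cases v
    · exact ⟨true, rfl⟩
    · exact ⟨false, rfl⟩)

theorem atp2_eq_iff {A Bm : Str U B} {SU : Set U} {SB : Set B} {a a' : A.Dom} {b b' : Bm.Dom} :
    atp2 A SU SB a a' = atp2 Bm SU SB b b' ↔
      ∀ α : Atom2 U B, α.inSig SU SB → (α.holds A a a' ↔ α.holds Bm b b') := by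
  simp only [atp2, Set.ext_iff, Set.mem_ofPred_eq]
  exact forall_congr' fun α => by tauto

theorem atp1_eq_iff {A Bm : Str U B} {SU : Set U} {SB : Set B} {a : A.Dom} {b : Bm.Dom} :
    atp1 A SU SB a = atp1 Bm SU SB b ↔
      ∀ α : Atom2 U B, α.inSig SU SB → (α.holds A a a ↔ α.holds Bm b b) := by
  simp only [atp1, Set.ext_iff, Set.mem_ofPred_eq]
  constructor
  · intro h α hα
    cases α with
    | ua P v =>
      have := h (.ua P .x)
      cases v <;> simp_all [Atom2.onlyX, Atom2.holds, Atom2.inSig, vval]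
    | ba R v w =>
      have := h (.ba R .x .x)
      cases v <;> cases w <;> simp_all [Atom2.onlyX, Atom2.holds, Atom2.inSig, vval]
  · intro h α
    have := h α
    tauto

theorem guarded_of_atp2 {A Bm : Str U B} {SU : Set U} {SB : Set B} {a a' : A.Dom} {b b' : Bm.Dom}
    (h : atp2 A SU SB a a' = atp2 Bm SU SB b b') (hg : Guarded2 A SB a a') :
    Guarded2 Bm SB b b' := by
  rw [atp2_eq_iff] at h
  obtain ⟨R, hR, h1⟩ := hg
  refine ⟨R, hR, ?_⟩
  have e1 := h (.ba R .x .y) hR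
  have e2 := h (.ba R .y .x) hR
  simp only [Atom2.holds, vval] at e1 e2
  rwa [← e1, ← e2]

theorem KBisim.atp1_eq {A Bm : Str U B} {SU : Set U} {SB : Set B} {k : ℕ} {a : A.Dom} {b : Bm.Dom}
    (h : KBisim A Bm SU SB k a b) : atp1 A SU SB a = atp1 Bm SU SB b := by
  cases k with
  | zero => exact h
  | succ k => exact h.1

theorem KBisim.pred {A Bm : Str U B} {SU : Set U} {SB : Set B} {k : ℕ} : ∀ {a : A.Dom} {b : Bm.Dom},
    KBisim A Bm SU SB (k+1) a b → KBisim A Bm SU SB k a b := by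
  induction k with
  | zero => intro a b h; exact h.1
  | succ k ih =>
    intro a b h
    refine ⟨h.1, fun a' h1 h2 => ?_, fun b' h1 h2 => ?_⟩
    · obtain ⟨b', x, y, z⟩ := h.2.1 a' h1 h2
      exact ⟨b', x, y, ih z⟩
    · obtain ⟨b', x, y, z⟩ := h.2.2 b' h1 h2
      exact ⟨b', x, y, ih z⟩

theorem KBisim.mono {A Bm : Str U B} {SU : Set U} {SB : Set B} {k l : ℕ} (hkl : k ≤ l)
    {a : A.Dom} {b : Bm.Dom}
    (h : KBisim A Bm SU SB l a b) : KBisim A Bm SU SB k a b := by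
  induction hkl with
  | refl => exact h
  | step _ ih => exact ih h.pred

theorem KBisim.symm {A Bm : Str U B} {SU : Set U} {SB : Set B} {k : ℕ} : ∀ {a : A.Dom} {b : Bm.Dom},
    KBisim A Bm SU SB k a b → KBisim Bm A SU SB k b a := by
  induction k with
  | zero => intro a b h; exact Eq.symm h
  | succ k ih =>
    intro a b h
    refine ⟨h.1.symm, fun a' h1 h2 => ?_, fun b' h1 h2 => ?_⟩
    · obtain ⟨b', x, y, z⟩ := h.2.2 a' h1 h2
      exact ⟨b', x, y.symm, ih z⟩
    · obtain ⟨b', x, y, z⟩ := h.2.1 b' h1 h2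
      exact ⟨b', x, y.symm, ih z⟩

theorem IsBisim.kbisim {A Bm : Str U B} {SU : Set U} {SB : Set B} {Z : A.Dom → Bm.Dom → Prop}
    (hZ : IsBisim A Bm SU SB Z) (k : ℕ) : ∀ {a : A.Dom} {b : Bm.Dom},
    Z a b → KBisim A Bm SU SB k a b := by
  induction k with
  | zero => intro a b h; exact hZ.atom_eq h
  | succ k ih =>
    intro a b h
    refine ⟨hZ.atom_eq h, fun a' h1 h2 => ?_, fun b' h1 h2 => ?_⟩
    · obtain ⟨b', x, y, z⟩ := hZ.forth h a' h1 h2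
      exact ⟨b', x, y, ih z⟩
    · obtain ⟨b', x, y, z⟩ := hZ.back h b' h1 h2
      exact ⟨b', x, y, ih z⟩

structure Match (A Bm : Str U B) (SU : Set U) (SB : Set B) (k : ℕ) (S : Set Var)
    (σ : Var → A.Dom) (τ : Var → Bm.Dom) : Prop where
  un : ∀ P ∈ SU, ∀ v ∈ S, (A.u P (σ v) ↔ Bm.u P (τ v))
  bi : ∀ R ∈ SB, ∀ v ∈ S, ∀ w ∈ S, (A.b R (σ v) (σ w) ↔ Bm.b R (τ v) (τ w))
  eq : ∀ v ∈ S, ∀ w ∈ S, (σ v = σ w ↔ τ v = τ w)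
  kb : ∀ v ∈ S, KBisim A Bm SU SB k (σ v) (τ v)

theorem Match.mono {A Bm : Str U B} {SU : Set U} {SB : Set B} {k l : ℕ} {S T : Set Var}
    {σ : Var → A.Dom} {τ : Var → Bm.Dom} (h : Match A Bm SU SB l T σ τ) (hk : k ≤ l) (hS : S ⊆ T) :
    Match A Bm SU SB k S σ τ :=
  ⟨fun P hP v hv => h.un P hP v (hS hv), fun P hP v hv w hw => h.bi P hP v (hS hv) w (hS hw),
   fun v hv w hw => h.eq v (hS hv) w (hS hw), fun v hv => (h.kb v (hS hv)).mono hk⟩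

theorem Match.symm {A Bm : Str U B} {SU : Set U} {SB : Set B} {k : ℕ} {S : Set Var}
    {σ : Var → A.Dom} {τ : Var → Bm.Dom} (h : Match A Bm SU SB k S σ τ) :
    Match Bm A SU SB k S τ σ :=
  ⟨fun P hP v hv => (h.un P hP v hv).symm, fun P hP v hv w hw => (h.bi P hP v hv w hw).symm,
   fun v hv w hw => (h.eq v hv w hw).symm, fun v hv => (h.kb v hv).symm⟩

theorem match_single {A Bm : Str U B} {SU : Set U} {SB : Set B} {k : ℕ} {v : Var}
    {σ : Var → A.Dom} {τ : Var → Bm.Dom} {d : A.Dom} {d' : Bm.Dom}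
    (h : KBisim A Bm SU SB k d d') : Match A Bm SU SB k {v} (upd σ v d) (upd τ v d') := by
  have h1 := atp1_eq_iff.1 h.atp1_eq
  refine ⟨fun P hP w hw => ?_, fun R hR w hw w' hw' => ?_, fun w hw w' hw' => ?_, fun w hw => ?_⟩
  · cases hw
    simpa [upd, Atom2.holds, vval] using h1 (.ua P .x) hP
  · cases hw; cases hw'
    simpa [upd, Atom2.holds, vval] using h1 (.ba R .x .x) hR
  · cases hw; cases hw'; simp
  · cases hw; simpa [upd] using h

theorem match_pair {A Bm : Str U B} {SU : Set U} {SB : Set B} {k : ℕ} {v w : Var} (hvw : w ≠ v)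
    {σ : Var → A.Dom} {τ : Var → Bm.Dom} {d : A.Dom} {d' : Bm.Dom}
    (h2 : atp2 A SU SB (σ w) d = atp2 Bm SU SB (τ w) d')
    (he : d = σ w ↔ d' = τ w)
    (hw : KBisim A Bm SU SB k (σ w) (τ w))
    (h : KBisim A Bm SU SB k d d') (S : Set Var) : Match A Bm SU SB k S (upd σ v d) (upd τ v d') := by
  rw [atp2_eq_iff] at h2
  have huv : ∀ u, u = v ∨ u = w := by
    intro u; revert hvw; cases u <;> cases v <;> cases w <;> simp
  have e1 : upd σ v d v = d := by simp [upd]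
  have e2 : upd σ v d w = σ w := by simp [upd, hvw]
  have e3 : upd τ v d' v = d' := by simp [upd]
  have e4 : upd τ v d' w = τ w := by simp [upd, hvw]
  refine ⟨fun P hP u _ => ?_, fun R hR u _ u' _ => ?_, fun u _ u' _ => ?_, fun u _ => ?_⟩
  · have t1 := h2 (.ua P .x) hP
    have t2 := h2 (.ua P .y) hP
    rcases huv u with rfl | rfl <;> simp only [e1, e2, e3, e4] <;> assumption
  · have t1 := h2 (.ba R .x .x) hR
    have t2 := h2 (.ba R .x .y) hR
    have t3 := h2 (.ba R .y .x) hR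
    have t4 := h2 (.ba R .y .y) hR
    rcases huv u with rfl | rfl <;> rcases huv u' with rfl | rfl <;> simp only [e1, e2, e3, e4] <;> assumption
  · rcases huv u with rfl | rfl <;> rcases huv u' with rfl | rfl <;> simp only [e1, e2, e3, e4]
    · exact he
    · rw [eq_comm, he, eq_comm]
  · rcases huv u with rfl | rfl <;> simp only [e1, e2, e3, e4] <;> assumption

theorem sat_atom_iff {A Bm : Str U B} {SU : Set U} {SB : Set B} {k : ℕ}
    {σ : Var → A.Dom} {τ : Var → Bm.Dom} {α : Fml U B} (hα : α.IsAtom)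
    (hu : α.upreds ⊆ SU) (hb : α.bpreds ⊆ SB) (h : Match A Bm SU SB k α.free σ τ) :
    Sat A α σ ↔ Sat Bm α τ := by
  cases α <;> simp only [Fml.IsAtom] at hα
  · exact h.un _ (hu rfl) _ rfl
  · exact h.bi _ (hb rfl) _ (by simp [Fml.free]) _ (by simp [Fml.free])
  · exact h.eq _ (by simp [Fml.free]) _ (by simp [Fml.free])

theorem match_step {A Bm : Str U B} {SU : Set U} {SB : Set B} {n : ℕ}
    {σ : Var → A.Dom} {τ : Var → Bm.Dom} {α : Fml U B} {v : Var} (hα : α.IsAtom)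
    (hv : v ∈ α.free) (hb : α.bpreds ⊆ SB)
    (hg : ∀ a, ∃ b, KBisim A Bm SU SB n a b)
    (h : Match A Bm SU SB (n+1) (α.free \ {v}) σ τ) (d : A.Dom) (hd : Sat A α (upd σ v d)) :
    ∃ d', Match A Bm SU SB n α.free (upd σ v d) (upd τ v d') := by
  obtain ⟨w, hw⟩ : ∃ w, w ≠ v := by cases v; exacts [⟨.y, by simp⟩, ⟨.x, by simp⟩]
  have huv : ∀ u, u = v ∨ u = w := by
    intro u; revert hw; cases u <;> cases v <;> cases w <;> simp
  by_cases hwf : w ∈ α.free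
  · have hk := h.kb w ⟨hwf, hw⟩
    by_cases hdw : d = σ w
    · subst hdw
      refine ⟨τ w, match_pair hw ?_ (by simp) hk.pred hk.pred _⟩
      rw [atp2_eq_iff]
      exact atp1_eq_iff.1 hk.atp1_eq
    · have hG : Guarded2 A SB (σ w) d := by
        cases α <;> simp only [Fml.IsAtom] at hα
        · exact absurd (Set.mem_singleton_iff.1 hv |>.trans (Set.mem_singleton_iff.1 hwf).symm) hw.symm
        · rename_i R p q
          have hR : R ∈ SB := hb rfl
          simp only [Fml.free, Set.mem_insert_iff, Set.mem_singleton_iff] at hv hwf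
          rcases huv p with rfl | rfl <;> rcases huv q with rfl | rfl
          · simp [hw] at hwf
          · exact ⟨R, hR, Or.inr (by simpa [Sat, upd, hw] using hd)⟩
          · exact ⟨R, hR, Or.inl (by simpa [Sat, upd, hw] using hd)⟩
          · simp [hw.symm] at hv
        · rename_i p q
          simp only [Fml.free, Set.mem_insert_iff, Set.mem_singleton_iff] at hv hwf
          exfalso
          rcases huv p with rfl | rfl <;> rcases huv q with rfl | rfl
          · simp [hw] at hwf
          · exact hdw (by simpa [Sat, upd, hw] using hd)
          · exact hdw (by simpa [Sat, upd, hw] using hd.symm)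
          · simp [hw.symm] at hv
      obtain ⟨d', h1, h2, h3⟩ := hk.2.1 d hdw hG
      exact ⟨d', match_pair hw h2 (by simp [hdw, h1]) hk.pred h3 _⟩
  · obtain ⟨d', hd'⟩ := hg d
    refine ⟨d', (match_single hd').mono le_rfl ?_⟩
    intro u hu
    rcases huv u with rfl | rfl
    · rfl
    · exact absurd hu hwf

theorem sat_iff {A Bm : Str U B} {SU : Set U} {SB : Set B} {K : ℕ}
    (hg1 : ∀ a, ∃ b, KBisim A Bm SU SB K a b) (hg2 : ∀ b, ∃ a, KBisim A Bm SU SB K a b)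
    {φ : Fml U B} (hφ : IsGF2 φ) :
    ∀ (σ : Var → A.Dom) (τ : Var → Bm.Dom), φ.upreds ⊆ SU → φ.bpreds ⊆ SB → φ.gdepth ≤ K →
      Match A Bm SU SB φ.gdepth φ.free σ τ → (Sat A φ σ ↔ Sat Bm φ τ) := by
  have g1 : ∀ n ≤ K, ∀ a, ∃ b, KBisim A Bm SU SB n a b := fun n hn a =>
    (hg1 a).imp fun b hb => hb.mono hn
  have g2 : ∀ n ≤ K, ∀ b, ∃ a, KBisim Bm A SU SB n b a := fun n hn a =>
    (hg2 a).imp fun b hb => (hb.mono hn).symm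
  induction hφ with
  | uatom P v => intro σ τ hu hb _ h; exact sat_atom_iff (by trivial) hu hb h
  | batom P v w => intro σ τ hu hb _ h; exact sat_atom_iff (by trivial) hu hb h
  | eqv v w => intro σ τ hu hb _ h; exact sat_atom_iff (by trivial) hu hb h
  | fls => intros; rfl
  | neg _ ih => intro σ τ hu hb hk h; exact not_congr (ih σ τ hu hb hk h)
  | conj _ _ ih1 ih2 =>
    intro σ τ hu hb hk h
    simp only [Fml.upreds, Fml.bpreds, Fml.gdepth, Set.union_subset_iff, max_le_iff] at hu hb hk
    exact and_congr (ih1 σ τ hu.1 hb.1 hk.1 (h.mono (le_max_left _ _) Set.subset_union_left))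
      (ih2 σ τ hu.2 hb.2 hk.2 (h.mono (le_max_right _ _) Set.subset_union_right))
  | disj _ _ ih1 ih2 =>
    intro σ τ hu hb hk h
    simp only [Fml.upreds, Fml.bpreds, Fml.gdepth, Set.union_subset_iff, max_le_iff] at hu hb hk
    exact or_congr (ih1 σ τ hu.1 hb.1 hk.1 (h.mono (le_max_left _ _) Set.subset_union_left))
      (ih2 σ τ hu.2 hb.2 hk.2 (h.mono (le_max_right _ _) Set.subset_union_right))
  | impl _ _ ih1 ih2 =>
    intro σ τ hu hb hk h
    simp only [Fml.upreds, Fml.bpreds, Fml.gdepth, Set.union_subset_iff, max_le_iff] at hu hb hk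
    exact imp_congr (ih1 σ τ hu.1 hb.1 hk.1 (h.mono (le_max_left _ _) Set.subset_union_left))
      (ih2 σ τ hu.2 hb.2 hk.2 (h.mono (le_max_right _ _) Set.subset_union_right))
  | @allG v α χ hα _ hf ih =>
    intro σ τ hu hb hk h
    simp only [Fml.upreds, Fml.bpreds, Fml.gdepth, Set.union_subset_iff] at hu hb hk h hf
    have hv : v ∈ α.free := hf.2 rfl
    have hk' : χ.gdepth ≤ K := le_trans (le_max_right _ _) (Nat.le_of_succ_le hk)
    have h' : Match A Bm SU SB (χ.gdepth + 1) (α.free \ {v}) σ τ :=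
      h.mono (Nat.succ_le_succ (le_max_right _ _))
        (Set.sdiff_subset_sdiff_left Set.subset_union_left)
    constructor
    · intro H d' hd'
      obtain ⟨d, hd⟩ := match_step hα hv hb.1 (g2 _ hk') h'.symm d' hd'
      exact (ih _ _ hu.2 hb.2 hk' (hd.symm.mono le_rfl hf.1)).1
        (H d ((sat_atom_iff hα hu.1 hb.1 hd.symm).2 hd'))
    · intro H d' hd'
      obtain ⟨d, hd⟩ := match_step hα hv hb.1 (g1 _ hk') h' d' hd'
      exact (ih _ _ hu.2 hb.2 hk' (hd.mono le_rfl hf.1)).2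
        (H d ((sat_atom_iff hα hu.1 hb.1 hd).1 hd'))
  | @exG v α χ hα _ hf ih =>
    intro σ τ hu hb hk h
    simp only [Fml.upreds, Fml.bpreds, Fml.gdepth, Set.union_subset_iff] at hu hb hk h hf
    have hv : v ∈ α.free := hf.2 rfl
    have hk' : χ.gdepth ≤ K := le_trans (le_max_right _ _) (Nat.le_of_succ_le hk)
    have h' : Match A Bm SU SB (χ.gdepth + 1) (α.free \ {v}) σ τ :=
      h.mono (Nat.succ_le_succ (le_max_right _ _))
        (Set.sdiff_subset_sdiff_left Set.subset_union_left)
    constructor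
    · rintro ⟨d', hd', H⟩
      obtain ⟨d, hd⟩ := match_step hα hv hb.1 (g1 _ hk') h' d' hd'
      exact ⟨d, (sat_atom_iff hα hu.1 hb.1 hd).1 hd', (ih _ _ hu.2 hb.2 hk' (hd.mono le_rfl hf.1)).1 H⟩
    · rintro ⟨d', hd', H⟩
      obtain ⟨d, hd⟩ := match_step hα hv hb.1 (g2 _ hk') h'.symm d' hd'
      exact ⟨d, (sat_atom_iff hα hu.1 hb.1 hd.symm).2 hd',
        (ih _ _ hu.2 hb.2 hk' (hd.symm.mono le_rfl hf.1)).2 H⟩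

theorem sentence_sat_iff {A Bm : Str U B} {SU : Set U} {SB : Set B} {K : ℕ}
    (hg1 : ∀ a, ∃ b, KBisim A Bm SU SB K a b) (hg2 : ∀ b, ∃ a, KBisim A Bm SU SB K a b)
    {φ : Fml U B} (hφ : IsGF2 φ) (hs : φ.IsSentence) (hu : φ.upreds ⊆ SU) (hb : φ.bpreds ⊆ SB)
    (hK : φ.gdepth ≤ K) (σ : Var → A.Dom) (τ : Var → Bm.Dom) : Sat A φ σ ↔ Sat Bm φ τ := by
  refine sat_iff hg1 hg2 hφ σ τ hu hb hK ?_
  rw [hs]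
  constructor <;> simp


theorem inSig_finite {SU : Set U} {SB : Set B} (hU : SU.Finite) (hB : SB.Finite) :
    {α : Atom2 U B | α.inSig SU SB}.Finite := by
  have := finite_Var
  have h1 : ((fun p : U × Var => Atom2.ua (B := B) p.1 p.2) '' (SU ×ˢ Set.univ)).Finite :=
    (hU.prod Set.finite_univ).image _
  have h2 : ((fun p : B × (Var × Var) => Atom2.ba (U := U) p.1 p.2.1 p.2.2) '' (SB ×ˢ Set.univ)).Finite :=
    (hB.prod Set.finite_univ).image _
  refine (h1.union h2).subset ?_
  intro α hα
  cases α with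
  | ua P v => exact Or.inl ⟨(P, v), ⟨hα, trivial⟩, rfl⟩
  | ba R v w => exact Or.inr ⟨(R, v, w), ⟨hα, trivial⟩, rfl⟩

theorem atp1_subset (A : Str U B) (SU : Set U) (SB : Set B) (a : A.Dom) :
    atp1 A SU SB a ⊆ {α : Atom2 U B | α.inSig SU SB} := fun _ h => h.2.1

theorem atp2_subset (A : Str U B) (SU : Set U) (SB : Set B) (a a' : A.Dom) :
    atp2 A SU SB a a' ⊆ {α : Atom2 U B | α.inSig SU SB} := fun _ h => h.1

/-- the k-bisimulation class of `a`, as a predicate on pointed structures -/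
def kt (A : Str U B) (SU : Set U) (SB : Set B) (k : ℕ) (a : A.Dom) :
    (Bm : Str U B) → Bm.Dom → Prop := fun Bm b => KBisim A Bm SU SB k a b

/-- the set of successor types -/
def sucT (A : Str U B) (SU : Set U) (SB : Set B) (k : ℕ) (a : A.Dom) :
    Set (Set (Atom2 U B) × ((Bm : Str U B) → Bm.Dom → Prop)) :=
  {p | ∃ a', a' ≠ a ∧ Guarded2 A SB a a' ∧ p = (atp2 A SU SB a a', kt A SU SB k a')}

def stepP (SU : Set U) (SB : Set B)
    (p : Set (Atom2 U B) × Set (Set (Atom2 U B) × ((Bm : Str U B) → Bm.Dom → Prop))) :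
    (Bm : Str U B) → Bm.Dom → Prop := fun Bm b =>
  p.1 = atp1 Bm SU SB b ∧
  (∀ q ∈ p.2, ∃ b', Guarded2 Bm SB b b' ∧ (b' ≠ b ∧ q.1 = atp2 Bm SU SB b b' ∧ q.2 Bm b')) ∧
  (∀ b', Guarded2 Bm SB b b' → (b' ≠ b → ∃ q ∈ p.2, q.1 = atp2 Bm SU SB b b' ∧ q.2 Bm b'))

theorem kt_succ (A : Str U B) (SU : Set U) (SB : Set B) (k : ℕ) (a : A.Dom) :
    kt A SU SB (k+1) a = stepP SU SB (atp1 A SU SB a, sucT A SU SB k a) := by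
  funext Bm b
  refine propext (and_congr Iff.rfl (and_congr ?_ ?_))
  · constructor
    · rintro h _ ⟨a', h1, h2, rfl⟩
      obtain ⟨b', x, y, z⟩ := h a' h1 h2
      exact ⟨b', guarded_of_atp2 y h2, x, y, z⟩
    · intro h a' h1 h2
      obtain ⟨b', _, x⟩ := h _ ⟨a', h1, h2, rfl⟩
      exact ⟨b', x⟩
  · constructor
    · intro h b' h1 h2
      obtain ⟨a', x, y, z⟩ := h b' h2 h1
      exact ⟨_, ⟨a', x, guarded_of_atp2 y.symm h1, rfl⟩, y, z⟩
    · intro h b' h2 h1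
      obtain ⟨_, ⟨a', x, y, rfl⟩, z⟩ := h b' h1 h2
      exact ⟨a', x, z⟩

theorem kt_finite (A : Str U B) {SU : Set U} {SB : Set B} (hU : SU.Finite) (hB : SB.Finite) (k : ℕ) :
    (Set.range (kt A SU SB k)).Finite := by
  have hf := (inSig_finite hU hB).finite_subsets
  induction k with
  | zero =>
    refine (hf.image (fun τ => (fun (Bm : Str U B) (b : Bm.Dom) => τ = atp1 Bm SU SB b))).subset ?_
    rintro _ ⟨a, rfl⟩
    exact ⟨atp1 A SU SB a, atp1_subset _ _ _ _, rfl⟩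
  | succ k ih =>
    have h2 := (hf.prod ih).finite_subsets
    refine ((hf.prod h2).image (stepP SU SB)).subset ?_
    rintro _ ⟨a, rfl⟩
    refine ⟨(atp1 A SU SB a, sucT A SU SB k a), ⟨atp1_subset _ _ _ _, ?_⟩, (kt_succ _ _ _ _ _).symm⟩
    rintro _ ⟨a', _, _, rfl⟩
    exact ⟨atp2_subset _ _ _ _ _, ⟨a', rfl⟩⟩

theorem sucT_finite (A : Str U B) {SU : Set U} {SB : Set B} (hU : SU.Finite) (hB : SB.Finite) (k : ℕ)
    (a : A.Dom) : (sucT A SU SB k a).Finite := by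
  refine ((inSig_finite hU hB).finite_subsets.prod (kt_finite A hU hB k)).subset ?_
  rintro _ ⟨a', _, _, rfl⟩
  exact ⟨atp2_subset _ _ _ _ _, ⟨a', rfl⟩⟩

/-! ### Finite outdegree models -/

theorem exists_witnesses (A : Str U B) {SU : Set U} {SB : Set B} (hU : SU.Finite) (hB : SB.Finite)
    (K : ℕ) (a : A.Dom) : ∃ W : Set A.Dom, W.Finite ∧ a ∉ W ∧
      ∀ j < K, ∀ a', a' ≠ a → Guarded2 A SB a a' → ∃ w ∈ W,
        atp2 A SU SB a a' = atp2 A SU SB a w ∧ kt A SU SB j a' = kt A SU SB j w := by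
  have h : ∀ j, ∃ W : Set A.Dom, W.Finite ∧ a ∉ W ∧
      ∀ a', a' ≠ a → Guarded2 A SB a a' → ∃ w ∈ W,
        atp2 A SU SB a a' = atp2 A SU SB a w ∧ kt A SU SB j a' = kt A SU SB j w := by
    intro j
    have hs : ∀ q : sucT A SU SB j a, ∃ a', a' ≠ a ∧ q.1 = (atp2 A SU SB a a', kt A SU SB j a') := by
      rintro ⟨_, a', h1, h2, rfl⟩
      exact ⟨a', h1, rfl⟩
    choose f hf using hs
    have := (sucT_finite A hU hB j a).to_subtype
    refine ⟨Set.range f, Set.finite_range f, ?_, ?_⟩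
    · rintro ⟨q, hq⟩
      exact (hf q).1 hq
    · intro a' h1 h2
      refine ⟨_, ⟨⟨_, a', h1, h2, rfl⟩, rfl⟩, ?_⟩
      have := (hf ⟨_, a', h1, h2, rfl⟩).2
      simpa using this
  choose W hW using h
  refine ⟨⋃ j ∈ Set.Iio K, W j, (Set.finite_Iio K).biUnion fun j _ => (hW j).1, ?_, ?_⟩
  · simp only [Set.mem_iUnion, not_exists]
    exact fun j _ => (hW j).2.1
  · intro j hj a' h1 h2
    obtain ⟨w, hw, h⟩ := (hW j).2.2 a' h1 h2
    exact ⟨w, Set.mem_biUnion (show j ∈ Set.Iio K from hj) hw, h⟩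

def Par {D : Type} (W : D → Set D) (p c : D × List D) : Prop :=
  c.2 = p.1 :: p.2 ∧ c.1 ∈ W p.1

def unravel (A : Str U B) (SU : Set U) (SB : Set B) (W : A.Dom → Set A.Dom) : Str U B where
  Dom := A.Dom × List A.Dom
  nonempty := let ⟨a⟩ := A.nonempty; ⟨(a, [])⟩
  u P p := P ∈ SU ∧ A.u P p.1
  b R p q := R ∈ SB ∧ A.b R p.1 q.1 ∧ (p = q ∨ Par W p q ∨ Par W q p)

theorem unravel_atp2 (A : Str U B) (SU : Set U) (SB : Set B) (W : A.Dom → Set A.Dom)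
    (p q : A.Dom × List A.Dom) (h : p = q ∨ Par W p q ∨ Par W q p) :
    atp2 A SU SB p.1 q.1 = atp2 (unravel A SU SB W) SU SB p q := by
  have h' : q = p ∨ Par W q p ∨ Par W p q := by tauto
  refine atp2_eq_iff.2 fun α hα => ?_
  cases α with
  | ua P v => cases v <;> simp_all [Atom2.inSig, Atom2.holds, vval, unravel]
  | ba R v w => cases v <;> cases w <;> simp_all [Atom2.inSig, Atom2.holds, vval, unravel]

theorem unravel_kbisim (A : Str U B) (SU : Set U) (SB : Set B) (W : A.Dom → Set A.Dom) (K : ℕ)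
    (hW1 : ∀ a, a ∉ W a)
    (hW : ∀ a, ∀ j < K, ∀ a', a' ≠ a → Guarded2 A SB a a' → ∃ w ∈ W a,
        atp2 A SU SB a a' = atp2 A SU SB a w ∧ kt A SU SB j a' = kt A SU SB j w) :
    ∀ j ≤ K, ∀ p : A.Dom × List A.Dom, KBisim A (unravel A SU SB W) SU SB j p.1 p := by
  have h1 : ∀ p : A.Dom × List A.Dom, atp1 A SU SB p.1 = atp1 (unravel A SU SB W) SU SB p := by
    intro p
    exact atp1_eq_iff.2 (atp2_eq_iff.1 (unravel_atp2 A SU SB W p p (Or.inl rfl)))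
  intro j
  induction j with
  | zero => exact fun _ p => h1 p
  | succ j ih =>
    intro hj p
    refine ⟨h1 p, fun a' h2 h3 => ?_, fun q h2 h3 => ?_⟩
    · obtain ⟨w, hw, e1, e2⟩ := hW p.1 j hj a' h2 h3
      refine ⟨(w, p.1 :: p.2), ?_, ?_, ?_⟩
      · intro e
        have : w = p.1 := congrArg Prod.fst e
        exact hW1 _ (this ▸ hw)
      · rw [e1]
        exact unravel_atp2 A SU SB W p (w, p.1 :: p.2) (Or.inr (Or.inl ⟨rfl, hw⟩))
      · have := ih (by omega) (w, p.1 :: p.2)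
        change kt A SU SB j w _ _ at this
        rw [← e2] at this
        exact this
    · have hp : Par W p q ∨ Par W q p := by
        obtain ⟨R, hR, h | h⟩ := h3
        · rcases h.2.2 with h | h
          · exact absurd h.symm h2
          · exact h
        · rcases h.2.2 with h | h
          · exact absurd h h2
          · exact h.symm
      refine ⟨Prod.fst q, ?_, unravel_atp2 A SU SB W p q (Or.inr hp), ih (by omega) q⟩
      intro e
      rcases hp with h | h
      · exact hW1 _ (e ▸ h.2)
      · have := h.2
        rw [e] at this
        exact hW1 _ this

theorem unravel_outdeg (A : Str U B) (SU : Set U) (SB : Set B) (W : A.Dom → Set A.Dom)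
    (hW : ∀ a, (W a).Finite) : FiniteOutdeg (unravel A SU SB W) := by
  intro p
  have h1 : ((fun w => ((w, Prod.fst p :: Prod.snd p) : A.Dom × List A.Dom)) '' W (Prod.fst p)).Finite :=
    (hW _).image _
  have h2 : {q : A.Dom × List A.Dom | Par W q p}.Finite := by
    refine Set.Subsingleton.finite ?_
    intro q hq q' hq'
    have := hq.1.symm.trans hq'.1
    simp only [List.cons.injEq] at this
    exact Prod.ext this.1 this.2
  refine (h1.union h2).subset ?_
  rintro q ⟨hne, R, h⟩
  have hp : Par W p q ∨ Par W q p := by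
    rcases h with h | h
    · rcases h.2.2 with h | h
      · exact absurd h.symm hne
      · exact h
    · rcases h.2.2 with h | h
      · exact absurd h hne
      · exact h.symm
  rcases hp with h | h
  · exact Or.inl ⟨Prod.fst q, h.2, Prod.ext rfl h.1.symm⟩
  · exact Or.inr h

theorem upreds_finite (φ : Fml U B) : φ.upreds.Finite := by
  induction φ <;> simp_all [Fml.upreds]

theorem bpreds_finite (φ : Fml U B) : φ.bpreds.Finite := by
  induction φ <;> simp_all [Fml.bpreds]

theorem backward (φ₁ φ₂ : Fml U B) (SU : Set U) (SB : Set B)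
    (h1 : IsGF2 φ₁) (h1s : φ₁.IsSentence)
    (H : ∀ A : Str U B, SatS A φ₁ → FiniteOutdeg A →
      ∃ Bm : Str U B, SatS Bm φ₂ ∧
        (∀ a, ∃ b, Bisim A Bm SU SB a b) ∧
        (∀ b, ∀ k : ℕ, ∃ a, KBisim A Bm SU SB k a b)) :
    GF2Entails SU SB φ₁ φ₂ := by
  intro ψ hψ he A hA
  by_contra hn
  simp only [SatS, not_forall] at hn
  obtain ⟨σ, hσ⟩ := hn
  let SU' := φ₁.upreds ∪ ψ.upreds
  let SB' := φ₁.bpreds ∪ ψ.bpreds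
  let K := max φ₁.gdepth ψ.gdepth
  have hU : SU'.Finite := (upreds_finite _).union (upreds_finite _)
  have hB : SB'.Finite := (bpreds_finite _).union (bpreds_finite _)
  choose W hW1 hW2 hW3 using exists_witnesses A hU hB K
  have hk := unravel_kbisim A SU' SB' W K hW2 hW3 K le_rfl
  have g1 : ∀ a, ∃ b, KBisim A (unravel A SU' SB' W) SU' SB' K a b := fun a => ⟨(a, []), hk (a, [])⟩
  have g2 : ∀ b, ∃ a, KBisim A (unravel A SU' SB' W) SU' SB' K a b := fun b => ⟨_, hk b⟩
  obtain ⟨Bm, hBm, c1, c2⟩ := H (unravel A SU' SB' W)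
    (fun τ => (sentence_sat_iff g1 g2 h1 h1s Set.subset_union_left Set.subset_union_left
      (le_max_left _ _) σ τ).1 (hA σ)) (unravel_outdeg A SU' SB' W hW1)
  obtain ⟨τ⟩ : Nonempty (Var → (unravel A SU' SB' W).Dom) := by
    obtain ⟨a⟩ := (unravel A SU' SB' W).nonempty
    exact ⟨fun _ => a⟩
  obtain ⟨ρ⟩ : Nonempty (Var → Bm.Dom) := by
    obtain ⟨a⟩ := Bm.nonempty
    exact ⟨fun _ => a⟩
  apply hσ
  rw [sentence_sat_iff g1 g2 hψ.1 hψ.2.1 Set.subset_union_right Set.subset_union_right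
      (le_max_right _ _) σ τ]
  rw [sentence_sat_iff (K := ψ.gdepth) (fun a => ?_) (fun b => c2 b _) hψ.1 hψ.2.1 hψ.2.2.1 hψ.2.2.2 le_rfl τ ρ]
  · exact he Bm hBm ρ
  · obtain ⟨b, Z, hZ, hb⟩ := c1 a
    exact ⟨b, hZ.kbisim _ hb⟩


/-! ### Definability -/

def Dfn (SU : Set U) (SB : Set B) (S : Set Var)
    (Q : (A : Str U B) → (Var → A.Dom) → Prop) : Prop :=
  ∃ χ : Fml U B, IsGF2 χ ∧ χ.free ⊆ S ∧ χ.upreds ⊆ SU ∧ χ.bpreds ⊆ SB ∧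
    ∀ A σ, Sat A χ σ ↔ Q A σ

section dfn
variable {SU : Set U} {SB : Set B} {S : Set Var} {Q Q' : (A : Str U B) → (Var → A.Dom) → Prop}

theorem Dfn.congr (h : Dfn SU SB S Q) (e : ∀ A σ, Q A σ ↔ Q' A σ) : Dfn SU SB S Q' := by
  obtain ⟨χ, a, b, c, d, f⟩ := h
  exact ⟨χ, a, b, c, d, fun A σ => (f A σ).trans (e A σ)⟩

theorem Dfn.mono {T : Set Var} (h : Dfn SU SB S Q) (hS : S ⊆ T) : Dfn SU SB T Q := by
  obtain ⟨χ, a, b, c, d, f⟩ := h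
  exact ⟨χ, a, b.trans hS, c, d, f⟩

theorem Dfn.neg (h : Dfn SU SB S Q) : Dfn SU SB S (fun A σ => ¬ Q A σ) := by
  obtain ⟨χ, a, b, c, d, f⟩ := h
  exact ⟨.neg χ, .neg a, b, c, d, fun A σ => not_congr (f A σ)⟩

theorem Dfn.and (h : Dfn SU SB S Q) (h' : Dfn SU SB S Q') :
    Dfn SU SB S (fun A σ => Q A σ ∧ Q' A σ) := by
  obtain ⟨χ, a, b, c, d, f⟩ := h
  obtain ⟨χ', a', b', c', d', f'⟩ := h'
  exact ⟨.conj χ χ', .conj a a', Set.union_subset b b', Set.union_subset c c', Set.union_subset d d',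
    fun A σ => and_congr (f A σ) (f' A σ)⟩

theorem Dfn.or (h : Dfn SU SB S Q) (h' : Dfn SU SB S Q') :
    Dfn SU SB S (fun A σ => Q A σ ∨ Q' A σ) :=
  (h.neg.and h'.neg).neg.congr fun A σ => by tauto

theorem Dfn.const (p : Prop) : Dfn SU SB S (fun _ _ => p) := by
  have h : Dfn (U := U) (B := B) SU SB S (fun _ _ => False) :=
    ⟨.fls, .fls, Set.empty_subset _, Set.empty_subset _, Set.empty_subset _, fun _ _ => Iff.rfl⟩
  by_cases hp : p
  · exact h.neg.congr fun _ _ => by simp [hp]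
  · exact h.congr fun _ _ => by simp [hp]

theorem Dfn.ball {ι : Type*} {I : Set ι} (hI : I.Finite)
    {F : ι → (A : Str U B) → (Var → A.Dom) → Prop} (h : ∀ i ∈ I, Dfn SU SB S (F i)) :
    Dfn SU SB S (fun A σ => ∀ i ∈ I, F i A σ) := by
  induction I, hI using Set.Finite.induction_on with
  | empty => exact (Dfn.const True).congr fun _ _ => by simp
  | @insert i I _ _ ih =>
    exact ((h i (Set.mem_insert _ _)).and (ih fun j hj => h j (Set.mem_insert_of_mem _ hj))).congr
      fun _ _ => by simp

theorem Dfn.bex {ι : Type*} {I : Set ι} (hI : I.Finite)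
    {F : ι → (A : Str U B) → (Var → A.Dom) → Prop} (h : ∀ i ∈ I, Dfn SU SB S (F i)) :
    Dfn SU SB S (fun A σ => ∃ i ∈ I, F i A σ) :=
  (Dfn.ball hI fun i hi => (h i hi).neg).neg.congr fun _ _ => by simp

theorem Dfn.atom (α : Atom2 U B) (hα : α.inSig SU SB) (v w : Var) :
    Dfn SU SB {v, w} (fun A σ => α.holds A (σ v) (σ w)) := by
  have hm : ∀ u : Var, vval v w u ∈ ({v, w} : Set Var) := by intro u; cases u <;> simp [vval]
  have he : ∀ (A : Str U B) (σ : Var → A.Dom) (u : Var), vval (σ v) (σ w) u = σ (vval v w u) := by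
    intro A σ u; cases u <;> rfl
  cases α with
  | ua P u =>
    refine ⟨.uatom P (vval v w u), .uatom _ _, ?_, ?_, Set.empty_subset _, fun A σ => ?_⟩
    · simpa [Fml.free] using hm u
    · exact Set.singleton_subset_iff.2 hα
    · simp only [Sat, Atom2.holds, he]
  | ba R u u' =>
    refine ⟨.batom R (vval v w u) (vval v w u'), .batom _ _ _, ?_, Set.empty_subset _, ?_, fun A σ => ?_⟩
    · exact Set.insert_subset (hm u) (Set.singleton_subset_iff.2 (hm u'))
    · exact Set.singleton_subset_iff.2 hα
    · simp only [Sat, Atom2.holds, he]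

theorem Dfn.eqv (v w : Var) : Dfn (U := U) (B := B) SU SB {v, w} (fun _ σ => σ v = σ w) :=
  ⟨.eqv v w, .eqv _ _, subset_rfl, Set.empty_subset _, Set.empty_subset _, fun _ _ => Iff.rfl⟩

theorem Dfn.iff (h : Dfn SU SB S Q) (h' : Dfn SU SB S Q') :
    Dfn SU SB S (fun A σ => Q A σ ↔ Q' A σ) :=
  ((h.and h').or (h.neg.and h'.neg)).congr fun A σ => by tauto

theorem Dfn.atp2 (hU : SU.Finite) (hB : SB.Finite) (τ : Set (Atom2 U B))
    (hτ : τ ⊆ {α : Atom2 U B | α.inSig SU SB}) (v w : Var) :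
    Dfn SU SB {v, w} (fun A σ => τ = atp2 A SU SB (σ v) (σ w)) := by
  refine (Dfn.ball (inSig_finite hU hB) fun α hα =>
    (Dfn.const (α ∈ τ)).iff (Dfn.atom α hα v w)).congr fun A σ => ?_
  simp only [GFC.atp2, Set.ext_iff, Set.mem_ofPred_eq]
  refine forall_congr' fun α => ?_
  have : α ∈ τ → α.inSig SU SB := fun h => hτ h
  tauto

theorem Dfn.atp1 (hU : SU.Finite) (hB : SB.Finite) (τ : Set (Atom2 U B))
    (hτ : ∀ α ∈ τ, α.onlyX ∧ α.inSig SU SB) (v : Var) :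
    Dfn SU SB {v} (fun A σ => τ = atp1 A SU SB (σ v)) := by
  refine (Dfn.ball (inSig_finite hU hB) fun α hα =>
    (Dfn.const (α ∈ τ)).iff ((Dfn.const α.onlyX).and
      ((Dfn.atom α hα v v).mono (T := {v}) (by simp)))).congr fun A σ => ?_
  simp only [GFC.atp1, Set.ext_iff, Set.mem_ofPred_eq]
  refine forall_congr' fun α => ?_
  have := hτ α
  tauto

theorem Dfn.guardedEx (hB : SB.Finite) {v w : Var} (hvw : v ≠ w) (h : Dfn SU SB {v, w} Q) :
    Dfn SU SB {v} (fun A σ => ∃ d, Guarded2 A SB (σ v) d ∧ Q A (upd σ w d)) := by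
  obtain ⟨χ, a, b, c, d, f⟩ := h
  have h1 : ∀ R ∈ SB, Dfn SU SB {v} (fun A σ => ∃ d, A.b R (σ v) d ∧ Q A (upd σ w d)) := by
    intro R hR
    refine ⟨.ex w (.conj (.batom R v w) χ), .exG trivial a ?_, ?_, ?_, ?_, fun A σ => ?_⟩
    · exact Set.union_subset b (by simp [Fml.free])
    · intro u hu
      simp only [Fml.free, Set.mem_sdiff, Set.mem_union, Set.mem_insert_iff, Set.mem_singleton_iff] at hu ⊢
      have := fun h => b (a := u) h
      simp only [Set.mem_insert_iff, Set.mem_singleton_iff] at this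
      tauto
    · simpa [Fml.upreds] using c
    · exact Set.union_subset (Set.singleton_subset_iff.2 hR) d
    · simp [Sat, f, upd, hvw]
  have h2 : ∀ R ∈ SB, Dfn SU SB {v} (fun A σ => ∃ d, A.b R d (σ v) ∧ Q A (upd σ w d)) := by
    intro R hR
    refine ⟨.ex w (.conj (.batom R w v) χ), .exG trivial a ?_, ?_, ?_, ?_, fun A σ => ?_⟩
    · refine Set.union_subset (b.trans ?_) (by simp [Fml.free])
      simp [Fml.free, Set.pair_comm]
    · intro u hu
      simp only [Fml.free, Set.mem_sdiff, Set.mem_union, Set.mem_insert_iff, Set.mem_singleton_iff] at hu ⊢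
      have := fun h => b (a := u) h
      simp only [Set.mem_insert_iff, Set.mem_singleton_iff] at this
      tauto
    · simpa [Fml.upreds] using c
    · exact Set.union_subset (Set.singleton_subset_iff.2 hR) d
    · simp [Sat, f, upd, hvw]
  refine (Dfn.bex hB fun R hR => (h1 R hR).or (h2 R hR)).congr fun A σ => ?_
  constructor
  · rintro ⟨R, hR, ⟨d, hd, hq⟩ | ⟨d, hd, hq⟩⟩
    · exact ⟨d, ⟨R, hR, Or.inl hd⟩, hq⟩
    · exact ⟨d, ⟨R, hR, Or.inr hd⟩, hq⟩
  · rintro ⟨d, ⟨R, hR, hd | hd⟩, hq⟩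
    · exact ⟨R, hR, Or.inl ⟨d, hd, hq⟩⟩
    · exact ⟨R, hR, Or.inr ⟨d, hd, hq⟩⟩

theorem Dfn.ex (h : Dfn SU SB {Var.x} Q) :
    Dfn SU SB ∅ (fun A σ => ∃ d, Q A (upd σ Var.x d)) := by
  obtain ⟨χ, a, b, c, d, f⟩ := h
  refine ⟨.ex .x (.conj (.eqv .x .x) χ), .exG trivial a ?_, ?_, ?_, ?_, fun A σ => ?_⟩
  · exact Set.union_subset (b.trans (by simp [Fml.free])) (by simp [Fml.free])
  · simpa [Fml.free, Set.subset_def] using b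
  · simpa [Fml.upreds] using c
  · simpa [Fml.bpreds] using d
  · simp [Sat, f]

theorem kt_dfn (A : Str U B) (hU : SU.Finite) (hB : SB.Finite) (k : ℕ) :
    ∀ (a : A.Dom) (v : Var), Dfn SU SB {v} (fun Bm σ => kt A SU SB k a Bm (σ v)) := by
  have h1 : ∀ (a : A.Dom) (v : Var), Dfn SU SB {v} (fun Bm σ => GFC.atp1 A SU SB a = GFC.atp1 Bm SU SB (σ v)) :=
    fun a v => Dfn.atp1 hU hB _ (fun α hα => ⟨hα.1, hα.2.1⟩) v
  induction k with
  | zero => exact h1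
  | succ k ih =>
    intro a v
    obtain ⟨w, hw⟩ : ∃ w, v ≠ w := by cases v; exacts [⟨.y, by simp⟩, ⟨.x, by simp⟩]
    rw [kt_succ]
    have hs := sucT_finite A hU hB k a
    have hq : ∀ q ∈ sucT A SU SB k a, Dfn SU SB {v, w}
        (fun Bm σ => q.1 = GFC.atp2 Bm SU SB (σ v) (σ w) ∧ q.2 Bm (σ w)) := by
      rintro _ ⟨a', _, _, rfl⟩
      exact (Dfn.atp2 hU hB _ (atp2_subset _ _ _ _ _) v w).and ((ih a' w).mono (by simp))
    refine (h1 a v).and (Dfn.and ?_ ?_)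
    · refine Dfn.ball hs fun q hq' => ?_
      refine (Dfn.guardedEx hB hw ((Dfn.eqv w v).neg.mono (T := {v, w}) (by rw [Set.pair_comm]) |>.and
        (hq q hq'))).congr fun Bm σ => ?_
      simp [upd, hw]
    · refine (Dfn.guardedEx hB hw ((Dfn.eqv w v).neg.mono (T := {v, w}) (by rw [Set.pair_comm]) |>.and
        (Dfn.bex hs hq).neg)).neg.congr fun Bm σ => ?_
      simp only [upd, hw, if_true, if_false]
      push Not
      rfl

theorem glob_dfn (A : Str U B) (hU : SU.Finite) (hB : SB.Finite) (k : ℕ) :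
    Dfn SU SB ∅ (fun Bm _ => (∀ a, ∃ b, KBisim A Bm SU SB k a b) ∧
      (∀ b, ∃ a, KBisim A Bm SU SB k a b)) := by
  have hf := kt_finite A hU hB k
  refine Dfn.and ?_ ?_
  · refine (Dfn.ball hf (F := fun q Bm σ => ∃ b, q Bm b) ?_).congr fun Bm σ => ?_
    · rintro _ ⟨a, rfl⟩
      exact (kt_dfn A hU hB k a .x).ex.congr fun Bm σ => by simp [upd]
    · simp only [Set.forall_mem_range]; rfl
  · refine ((Dfn.bex hf (F := fun q Bm σ => q Bm (σ .x)) ?_).neg.ex.neg).congr fun Bm σ => ?_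
    · rintro _ ⟨a, rfl⟩
      exact kt_dfn A hU hB k a .x
    · simp [upd, kt]

end dfn

/-! ### Ultraproducts -/

open Filter in
def ultra (F : Ultrafilter ℕ) (Bs : ℕ → Str U B) : Str U B where
  Dom := Filter.Product (F : Filter ℕ) (fun n => (Bs n).Dom)
  nonempty := ⟨Quotient.mk _ (fun n => (Bs n).nonempty.some)⟩
  u P p := ∀ᶠ n in (F : Filter ℕ), (Bs n).u P (Quotient.out p n)
  b R p q := ∀ᶠ n in (F : Filter ℕ), (Bs n).b R (Quotient.out p n) (Quotient.out q n)

section ultra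
open Filter
variable (F : Ultrafilter ℕ) (Bs : ℕ → Str U B)

noncomputable def ev (d : (ultra F Bs).Dom) (n : ℕ) : (Bs n).Dom := Quotient.out d n

noncomputable def mkU (g : ∀ n, (Bs n).Dom) : (ultra F Bs).Dom := Quotient.mk _ g

theorem ev_mkU (g : ∀ n, (Bs n).Dom) : ∀ᶠ n in (F : Filter ℕ), ev F Bs (mkU F Bs g) n = g n := by
  have := Quotient.mk_out (s := productSetoid (F : Filter ℕ) (fun n => (Bs n).Dom)) g
  exact this

theorem ultra_eq_iff (d d' : (ultra F Bs).Dom) :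
    d = d' ↔ ∀ᶠ n in (F : Filter ℕ), ev F Bs d n = ev F Bs d' n := by
  constructor
  · rintro rfl
    exact Eventually.of_forall fun _ => rfl
  · intro h
    exact Quotient.out_equiv_out.1 h

theorem los (φ : Fml U B) : ∀ σ : Var → (ultra F Bs).Dom,
    Sat (ultra F Bs) φ σ ↔ ∀ᶠ n in (F : Filter ℕ), Sat (Bs n) φ (fun v => ev F Bs (σ v) n) := by
  have hupd : ∀ (σ : Var → (ultra F Bs).Dom) v d n, (fun w => ev F Bs (upd σ v d w) n) =
      upd (fun w => ev F Bs (σ w) n) v (ev F Bs d n) := by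
    intro σ v d n
    funext w
    simp only [upd]
    split <;> rfl
  have hex : ∀ (v : Var) (σ : Var → (ultra F Bs).Dom) (P : ∀ n, (Var → (Bs n).Dom) → Prop),
      (∃ d, ∀ᶠ n in (F : Filter ℕ), P n (fun w => ev F Bs (upd σ v d w) n)) ↔
      ∀ᶠ n in (F : Filter ℕ), ∃ d, P n (upd (fun w => ev F Bs (σ w) n) v d) := by
    intro v σ P
    constructor
    · rintro ⟨d, hd⟩
      filter_upwards [hd] with n hn
      rw [hupd] at hn
      exact ⟨_, hn⟩
    · intro h
      have : ∀ n, ∃ d, (∃ d, P n (upd (fun w => ev F Bs (σ w) n) v d)) →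
          P n (upd (fun w => ev F Bs (σ w) n) v d) := by
        intro n
        by_cases h : ∃ d, P n (upd (fun w => ev F Bs (σ w) n) v d)
        · exact ⟨h.choose, fun _ => h.choose_spec⟩
        · exact ⟨(Bs n).nonempty.some, fun h' => absurd h' h⟩
      choose g hg using this
      refine ⟨mkU F Bs g, ?_⟩
      filter_upwards [h, ev_mkU F Bs g] with n h1 h2
      rw [hupd, h2]
      exact hg n h1
  induction φ with
  | uatom P v => intro σ; rfl
  | batom R v w => intro σ; rfl
  | eqv v w => intro σ; exact ultra_eq_iff F Bs _ _
  | fls => intro σ; simpa [Sat] using F.neBot.ne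
  | neg φ ih => intro σ; simp only [Sat, ih, Ultrafilter.eventually_not]
  | conj φ ψ ih1 ih2 => intro σ; simp only [Sat, ih1, ih2, eventually_and]
  | disj φ ψ ih1 ih2 => intro σ; simp only [Sat, ih1, ih2, Ultrafilter.eventually_or]
  | impl φ ψ ih1 ih2 => intro σ; simp only [Sat, ih1, ih2, Ultrafilter.eventually_imp]
  | all v φ ih =>
    intro σ
    have := hex v σ (fun n τ => ¬ Sat (Bs n) φ τ)
    simp only [Ultrafilter.eventually_not, ← ih] at this
    rw [← not_iff_not]
    simp only [Sat, not_forall]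
    rw [this, ← Ultrafilter.eventually_not]
    simp only [not_forall]
  | ex v φ ih =>
    intro σ
    simp only [Sat, ih]
    exact hex v σ (fun n τ => Sat (Bs n) φ τ)

theorem ultra_holds (α : Atom2 U B) (d d' : (ultra F Bs).Dom) :
    α.holds (ultra F Bs) d d' ↔ ∀ᶠ n in (F : Filter ℕ), α.holds (Bs n) (ev F Bs d n) (ev F Bs d' n) := by
  cases α with
  | ua P v => cases v <;> rfl
  | ba R v w => cases v <;> cases w <;> rfl

theorem ultra_atp2 {A : Str U B} {SU : Set U} {SB : Set B} {a a' : A.Dom} {d d' : (ultra F Bs).Dom}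
    (h : ∀ᶠ n in (F : Filter ℕ), atp2 A SU SB a a' = atp2 (Bs n) SU SB (ev F Bs d n) (ev F Bs d' n)) :
    atp2 A SU SB a a' = atp2 (ultra F Bs) SU SB d d' := by
  rw [atp2_eq_iff]
  intro α hα
  rw [ultra_holds]
  have h' : ∀ᶠ n in (F : Filter ℕ), (α.holds A a a' ↔ α.holds (Bs n) (ev F Bs d n) (ev F Bs d' n)) := by
    filter_upwards [h] with n hn
    exact atp2_eq_iff.1 hn α hα
  constructor
  · intro h1
    filter_upwards [h'] with n hn
    exact hn.1 h1
  · intro h1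
    obtain ⟨n, h2, h3⟩ := (h'.and h1).exists
    exact h2.2 h3

theorem ultra_atp1 {A : Str U B} {SU : Set U} {SB : Set B} {a : A.Dom} {d : (ultra F Bs).Dom}
    (h : ∀ᶠ n in (F : Filter ℕ), atp1 A SU SB a = atp1 (Bs n) SU SB (ev F Bs d n)) :
    atp1 A SU SB a = atp1 (ultra F Bs) SU SB d := by
  rw [atp1_eq_iff, ← atp2_eq_iff]
  apply ultra_atp2
  filter_upwards [h] with n hn
  rw [atp2_eq_iff, ← atp1_eq_iff]
  exact hn

/-- pigeonhole for ultrafilters -/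
theorem ultra_pigeon {ι : Type*} {I : Set ι} (hI : I.Finite) {P : ℕ → ι → Prop}
    (h : ∀ᶠ n in (F : Filter ℕ), ∃ i ∈ I, P n i) : ∃ i ∈ I, ∀ᶠ n in (F : Filter ℕ), P n i := by
  by_contra hn
  push Not at hn
  have h1 : ∀ᶠ n in (F : Filter ℕ), ∀ i ∈ I, ¬ P n i :=
    (eventually_all_finite hI).2 fun i hi => Ultrafilter.eventually_not.2 (by simpa using hn i hi)
  obtain ⟨n, ⟨i, hi, h2⟩, h3⟩ := (h.and h1).exists
  exact h3 i hi h2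

theorem ultra_bisim {A : Str U B} {SU : Set U} {SB : Set B} (hA : FiniteOutdeg A)
    (hF : ∀ k, ∀ᶠ n in (F : Filter ℕ), k ≤ n) (hB : SB.Finite) :
    IsBisim A (ultra F Bs) SU SB
      (fun a d => ∀ k, ∀ᶠ n in (F : Filter ℕ), KBisim A (Bs n) SU SB k a (ev F Bs d n)) := by
  constructor
  · intro a d h
    exact ultra_atp1 F Bs (h 0)
  · intro a d h a' hne hg
    have hs : ∀ n, ∃ e : (Bs n).Dom, ∀ k, k ≤ n → KBisim A (Bs n) SU SB (k+1) a (ev F Bs d n) →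
        e ≠ ev F Bs d n ∧ atp2 A SU SB a a' = atp2 (Bs n) SU SB (ev F Bs d n) e ∧
          KBisim A (Bs n) SU SB k a' e := by
      intro n
      by_cases hk : ∃ k, k ≤ n ∧ KBisim A (Bs n) SU SB (k+1) a (ev F Bs d n)
      · classical
        let S := (Finset.range (n+1)).filter fun k => KBisim A (Bs n) SU SB (k+1) a (ev F Bs d n)
        have hS : S.Nonempty := by
          obtain ⟨k, h1, h2⟩ := hk
          exact ⟨k, by simp only [S, Finset.mem_filter, Finset.mem_range]; exact ⟨by omega, h2⟩⟩
        have hm := S.max'_mem hS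
        obtain ⟨e, h1, h2, h3⟩ := (Finset.mem_filter.1 hm).2.2.1 a' hne hg
        refine ⟨e, fun k hk1 hk2 => ⟨h1, h2, h3.mono (S.le_max' k ?_)⟩⟩
        simp only [S, Finset.mem_filter, Finset.mem_range]
        exact ⟨by omega, hk2⟩
      · exact ⟨(Bs n).nonempty.some, fun k h1 h2 => absurd ⟨k, h1, h2⟩ hk⟩
    choose g hg' using hs
    have hev := ev_mkU F Bs g
    refine ⟨mkU F Bs g, ?_, ?_, ?_⟩
    · intro e
      obtain ⟨n, h1, h2, h3⟩ := ((h 1).and (hev.and ((ultra_eq_iff F Bs _ _).1 e))).exists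
      exact (hg' n 0 (Nat.zero_le _) h1).1 (h2.symm.trans h3)
    · apply ultra_atp2
      filter_upwards [h 1, hev] with n h1 h2
      rw [h2]
      exact (hg' n 0 (Nat.zero_le _) h1).2.1
    · intro k
      filter_upwards [h (k+1), hev, hF k] with n h1 h2 h3
      rw [h2]
      exact (hg' n k h3 h1).2.2
  · intro a d h e hne hg
    have hN := hA a
    have hne' : ∀ᶠ n in (F : Filter ℕ), ev F Bs e n ≠ ev F Bs d n :=
      Ultrafilter.eventually_not.2 fun h => hne ((ultra_eq_iff F Bs _ _).2 h)
    have hg' : ∀ᶠ n in (F : Filter ℕ), Guarded2 (Bs n) SB (ev F Bs d n) (ev F Bs e n) := by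
      obtain ⟨R, hR, hr | hr⟩ := hg
      · exact hr.mono fun n hn => ⟨R, hR, Or.inl hn⟩
      · exact hr.mono fun n hn => ⟨R, hR, Or.inr hn⟩
    have key : ∀ k, ∃ a' ∈ {a' | a' ≠ a ∧ ∃ R : B, A.b R a a' ∨ A.b R a' a},
        ∀ᶠ n in (F : Filter ℕ), (atp2 A SU SB a a' = atp2 (Bs n) SU SB (ev F Bs d n) (ev F Bs e n) ∧
          KBisim A (Bs n) SU SB k a' (ev F Bs e n)) := by
      intro k
      apply ultra_pigeon F hN
      filter_upwards [h (k+1), hne', hg'] with n h1 h2 h3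
      obtain ⟨a', x, y, z⟩ := h1.2.2 _ h2 h3
      obtain ⟨R, hR, hr⟩ := guarded_of_atp2 y.symm h3
      exact ⟨a', ⟨x, R, hr⟩, y, z⟩
    choose f hf1 hf2 using key
    have : Finite {a' | a' ≠ a ∧ ∃ R : B, A.b R a a' ∨ A.b R a' a} := hN
    obtain ⟨⟨a', ha'⟩, hinf⟩ := Finite.exists_infinite_fiber
      (fun k => (⟨f k, hf1 k⟩ : {a' | a' ≠ a ∧ ∃ R : B, A.b R a a' ∨ A.b R a' a}))
    have hinf' := Set.infinite_coe_iff.1 hinf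
    have hall : ∀ k, ∃ l ≥ k, f l = a' := by
      intro k
      obtain ⟨l, hl, hkl⟩ := hinf'.exists_gt k
      exact ⟨l, hkl.le, by simpa using congrArg Subtype.val hl⟩
    refine ⟨a', ha'.1, ?_, ?_⟩
    · obtain ⟨l, _, rfl⟩ := hall 0
      exact ultra_atp2 F Bs ((hf2 l).mono fun n hn => hn.1)
    · intro k
      obtain ⟨l, hl, rfl⟩ := hall k
      exact (hf2 l).mono fun n hn => hn.2.mono hl

end ultra

theorem forward (φ₁ φ₂ : Fml U B) (SU : Set U) (SB : Set B)
    (hSU : SU.Finite) (hSB : SB.Finite) (H : GF2Entails SU SB φ₁ φ₂)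
    (A : Str U B) (hA : SatS A φ₁) (hfin : FiniteOutdeg A) :
      ∃ Bm : Str U B, SatS Bm φ₂ ∧
        (∀ a, ∃ b, Bisim A Bm SU SB a b) ∧
        (∀ b, ∀ k : ℕ, ∃ a, KBisim A Bm SU SB k a b) := by
  have hrefl : ∀ k (a : A.Dom), KBisim A A SU SB k a a := by
    intro k
    induction k with
    | zero => exact fun a => rfl
    | succ k ih => exact fun a => ⟨rfl, fun a' h _ => ⟨a', h, rfl, ih a'⟩, fun a' h _ => ⟨a', h, rfl, ih a'⟩⟩
  have hex : ∀ k, ∃ Bm : Str U B, SatS Bm φ₂ ∧ (∀ a, ∃ b, KBisim A Bm SU SB k a b) ∧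
      (∀ b, ∃ a, KBisim A Bm SU SB k a b) := by
    intro k
    obtain ⟨χ, h1, h2, h3, h4, h5⟩ := glob_dfn A hSU hSB k
    by_contra hn
    have := H (.neg χ) ⟨.neg h1, Set.subset_empty_iff.1 h2, h3, h4⟩ (fun Bm hB σ hs =>
      hn ⟨Bm, hB, (h5 Bm σ).1 hs⟩) A hA (fun _ => A.nonempty.some)
    exact this ((h5 _ _).2 ⟨fun a => ⟨a, hrefl k a⟩, fun a => ⟨a, hrefl k a⟩⟩)
  choose Bs hB1 hB2 hB3 using hex
  let F : Ultrafilter ℕ := Filter.hyperfilter ℕ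
  have hF : ∀ k, ∀ᶠ n in (F : Filter ℕ), k ≤ n := by
    intro k
    have : (F : Filter ℕ) ≤ Filter.atTop := Nat.hyperfilter_le_atTop
    exact this (Filter.eventually_ge_atTop k)
  refine ⟨ultra F Bs, fun σ => ?_, fun a => ?_, fun b k => ?_⟩
  · rw [los]
    exact Filter.Eventually.of_forall fun n => hB1 n _
  · choose g hg using fun n => hB2 n a
    refine ⟨mkU F Bs g, _, ultra_bisim F Bs hfin hF hSB, ?_⟩
    intro k
    filter_upwards [hF k, ev_mkU F Bs g] with n h1 h2
    rw [h2]
    exact (hg n).mono h1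
  · obtain ⟨_, ⟨a, rfl⟩, h⟩ := ultra_pigeon F (kt_finite A hSU hSB k)
      (P := fun n q => q (Bs n) (ev F Bs b n)) (by
        filter_upwards [hF k] with n hn
        obtain ⟨a, ha⟩ := hB3 n (ev F Bs b n)
        exact ⟨_, ⟨a, rfl⟩, ha.mono hn⟩)
    refine ⟨a, ?_⟩
    obtain ⟨χ, _, _, _, _, h5⟩ := kt_dfn A hSU hSB k a .x
    have := (los F Bs χ (fun _ => b)).2 (h.mono fun n hn => (h5 _ _).2 hn)
    exact (h5 _ _).1 this

end helpers


/-- Theorem 4 of the paper: `φ₁ ⊨_Σ φ₂` iff for every model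
`𝔄` of `φ₁` of finite outdegree there is a model `𝔅` of `φ₂` such that (1)
every `a ∈ A` is GF²(Σ)-bisimilar to some `b ∈ B` and (2) every `b ∈ B` is
k-GF²(Σ)-bisimilar to some `a ∈ A`, for every `k`. -/
theorem gf2_entails_iff_bisimulation_conditions
    {U B : Type} (φ₁ φ₂ : Fml U B) (SU : Set U) (SB : Set B)
    (hSU : SU.Finite) (hSB : SB.Finite)
    (h1 : IsGF2 φ₁) (h1s : φ₁.IsSentence)
    (h2 : IsGF2 φ₂) (h2s : φ₂.IsSentence) :
    GF2Entails SU SB φ₁ φ₂ ↔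
    (∀ A : Str U B, SatS A φ₁ → FiniteOutdeg A →
      ∃ Bm : Str U B, SatS Bm φ₂ ∧
        (∀ a, ∃ b, Bisim A Bm SU SB a b) ∧
        (∀ b, ∀ k : ℕ, ∃ a, KBisim A Bm SU SB k a b)) := by
  exact ⟨fun H A hA hf => forward φ₁ φ₂ SU SB hSU hSB H A hA hf, backward φ₁ φ₂ SU SB h1 h1s⟩

end GFC
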